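/- arXiv:math/0703035 — 6 statements merged into one kernel-verified Lean document; each statement's English description precedes it below -/
import Mathlib

section
/- Let K be a field, R = K[x_1, …, x_n], and G a finite group acting on R by K-algebra automorphisms, with char K not dividing |G|. Let S ⊆ R^G be a set of invariant polynomials. Then the contraction of the R-ideal generated by S to the invariant ring equals the R^G-ideal generated by S: ⟨S⟩_R ∩ R^G = ⟨S⟩_{R^G}, i.e., every invariant polynomial b lying in the ideal of R generated by S can be written as b = Σ_i r_i q_i with r_i ∈ R^G and q_i ∈ S. -/
open MvPolynomial

/-- The invariant ring `R^G = {r ∈ R : g.r = r for all g ∈ G}`, as a `K`-subalgebra of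
the polynomial ring `R = K[x_1, …, x_n]`. -/
def invariants {n : ℕ} {K : Type*} [Field K] {G : Type*} [Group G]
    (φ : G →* (MvPolynomial (Fin n) K ≃ₐ[K] MvPolynomial (Fin n) K)) :
    Subalgebra K (MvPolynomial (Fin n) K) where
  carrier := {p | ∀ g : G, φ g p = p}
  mul_mem' := fun ha hb g => by rw [map_mul, ha g, hb g]
  one_mem' := fun g => map_one (φ g)
  add_mem' := fun ha hb g => by rw [map_add, ha g, hb g]
  zero_mem' := fun g => map_zero (φ g)
  algebraMap_mem' := fun r g => (φ g).commutes r

/-- The transfer `r ↦ ∑ g, g.r`, valued in the invariant ring. -/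
noncomputable def transferInv {n : ℕ} {K : Type*} [Field K] {G : Type*} [Group G] [Fintype G]
    (φ : G →* (MvPolynomial (Fin n) K ≃ₐ[K] MvPolynomial (Fin n) K))
    (p : MvPolynomial (Fin n) K) : invariants φ :=
  ⟨∑ g : G, φ g p, fun h => by
    rw [map_sum]
    exact Fintype.sum_equiv (Equiv.mulLeft h) _ _ (fun g => by simp)⟩

/-- In the non-modular case, for any set `S ⊆ R^G` of invariant
polynomials, the contraction to `R^G` of the ideal of `R` generated by `S` equals the
ideal of `R^G` generated by `S`:  `⟨S⟩_R ∩ R^G = ⟨S⟩_{R^G}`. -/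
theorem contraction_of_span_eq_span {n : ℕ} {K : Type*} [Field K]
    {G : Type*} [Group G] [Fintype G]
    (φ : G →* (MvPolynomial (Fin n) K ≃ₐ[K] MvPolynomial (Fin n) K))
    (hnm : ¬ (ringChar K ∣ Fintype.card G))
    (S : Set (invariants φ)) :
    Ideal.comap (invariants φ).val
        (Ideal.span ((invariants φ).val '' S)) = Ideal.span S := by
  apply le_antisymm
  · intro b hb
    have key : ∀ x ∈ Ideal.span ((invariants φ).val '' S), ∀ r,
        transferInv φ (r * x) ∈ Ideal.span S := by
      intro x hx
      induction hx using Submodule.span_induction with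
      | mem x hx =>
        obtain ⟨s, hs, rfl⟩ := hx
        intro r
        have : transferInv φ (r * (invariants φ).val s) = transferInv φ r * s := by
          apply Subtype.ext
          change ∑ g : G, φ g (r * s.1) = (∑ g : G, φ g r) * s.1
          rw [Finset.sum_mul]
          refine Finset.sum_congr rfl fun g _ => ?_
          rw [map_mul, s.2 g]
        rw [this]
        exact Ideal.mul_mem_left _ _ (Ideal.subset_span hs)
      | zero =>
        intro r
        have : transferInv φ (r * 0) = 0 := by
          apply Subtype.ext
          simp [transferInv]
        rw [this]
        exact Ideal.zero_mem _
      | add x y _ _ hx hy =>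
        intro r
        have : transferInv φ (r * (x + y)) = transferInv φ (r * x) + transferInv φ (r * y) := by
          apply Subtype.ext
          simp [transferInv, mul_add, Finset.sum_add_distrib]
        rw [this]
        exact Ideal.add_mem _ (hx r) (hy r)
      | smul a x _ hx =>
        intro r
        rw [smul_eq_mul, ← mul_assoc]
        exact hx _
    have h1 := key b.1 hb 1
    have hc : (Fintype.card G : K) ≠ 0 := fun h => hnm ((ringChar.spec K _).1 h)
    have h2 : transferInv φ (1 * b.1) = (Fintype.card G : invariants φ) * b := by
      apply Subtype.ext
      change ∑ g : G, φ g (1 * b.1) = _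
      rw [Finset.sum_congr rfl (fun g _ => by rw [one_mul, b.2 g])]
      simp
    have h3 : b = algebraMap K (invariants φ) (Fintype.card G : K)⁻¹ *
        transferInv φ (1 * b.1) := by
      rw [h2, ← mul_assoc, ← map_natCast (algebraMap K (invariants φ)), ← map_mul,
        inv_mul_cancel₀ hc, map_one, one_mul]
    rw [h3]
    exact Ideal.mul_mem_left _ _ h1
  · rw [Ideal.span_le]
    intro s hs
    exact Ideal.subset_span ⟨s, hs, rfl⟩
end

section
/- Let K be a field, R = K[x_1, …, x_n], and G a finite group acting on R by degree-preserving K-algebra automorphisms (e.g., linearly on the variables), with char K not dividing |G|. Let d ≥ 1 and let S ⊆ R^G be a set of homogeneous invariant non-constant polynomials such that R^G_{d'} ⊆ ⟨⟨S⟩⟩ for all d' < d, where R^G_{d'} is the set of homogeneous invariants of degree d'. Then for every homogeneous invariant b of degree d, one has b ∈ ⟨⟨S⟩⟩ if and only if b ∈ ⟨S⟩. -/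
open MvPolynomial

/-- Non-modular case, degree-preserving action. If `S` is a set of
homogeneous invariant non-constant polynomials such that every homogeneous invariant of
degree `< d` lies in the subalgebra `⟨⟨S⟩⟩` generated by `S`, then a homogeneous
invariant `b` of degree `d` lies in `⟨⟨S⟩⟩` if and only if it lies in the ideal `⟨S⟩`
of `R` generated by `S`. -/
theorem mem_adjoin_iff_mem_span {n : ℕ} {K : Type*} [Field K]
    {G : Type*} [Group G] [Fintype G]
    (φ : G →* (MvPolynomial (Fin n) K ≃ₐ[K] MvPolynomial (Fin n) K))
    (hdeg : ∀ (g : G) (e : ℕ) (p : MvPolynomial (Fin n) K),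
      p.IsHomogeneous e → (φ g p).IsHomogeneous e)
    (hnm : ¬ (ringChar K ∣ Fintype.card G))
    (d : ℕ) (hd : 1 ≤ d)
    (S : Set (MvPolynomial (Fin n) K))
    (hSinv : ∀ s ∈ S, ∀ g : G, φ g s = s)
    (hShom : ∀ s ∈ S, ∃ e, MvPolynomial.IsHomogeneous s e)
    (hSnc : ∀ s ∈ S, ∀ c : K, s ≠ MvPolynomial.C c)
    (hlow : ∀ d' < d, ∀ p : MvPolynomial (Fin n) K,
      p.IsHomogeneous d' → (∀ g : G, φ g p = p) → p ∈ Algebra.adjoin K S)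
    (b : MvPolynomial (Fin n) K) (hb : b.IsHomogeneous d) (hbinv : ∀ g : G, φ g b = b) :
    b ∈ Algebra.adjoin K S ↔ b ∈ Ideal.span S := by
  classical
  have hpos : ∀ s ∈ S, ∃ e, 1 ≤ e ∧ MvPolynomial.IsHomogeneous s e := by
    intro s hs
    obtain ⟨e, he⟩ := hShom s hs
    refine ⟨e, ?_, he⟩
    rcases Nat.eq_zero_or_pos e with h0 | h0
    · subst h0
      exfalso
      apply hSnc s hs (coeff 0 s)
      rw [← homogeneousComponent_zero, homogeneousComponent_eq_self he]
    · exact h0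
  have hcoeff : ∀ (p : MvPolynomial (Fin n) K) (e : ℕ), 1 ≤ e → p.IsHomogeneous e →
      constantCoeff p = 0 := by
    intro p e he hp
    rw [constantCoeff_eq]
    apply hp.coeff_eq_zero
    simp
    omega
  constructor
  · intro h
    have key : ∀ p ∈ Algebra.adjoin K S, p - C (constantCoeff p) ∈ Ideal.span S := by
      intro p hp
      induction hp using Algebra.adjoin_induction with
      | mem s hs =>
        obtain ⟨e, he, hse⟩ := hpos s hs
        rw [hcoeff s e he hse, map_zero, sub_zero]
        exact Ideal.subset_span hs
      | algebraMap r => simp [MvPolynomial.algebraMap_eq]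
      | add x y _ _ hx hy =>
        have := Ideal.add_mem _ hx hy
        convert this using 1
        simp only [map_add]
        ring
      | mul x y _ _ hx hy =>
        have := Ideal.add_mem _ (Ideal.mul_mem_left _ x hy)
          (Ideal.mul_mem_left _ (C (constantCoeff y)) hx)
        convert this using 1
        simp only [map_mul]
        ring
    have := key b h
    rwa [hcoeff b d hd hb, map_zero, sub_zero] at this
  · intro h
    let T : MvPolynomial (Fin n) K →ₗ[K] MvPolynomial (Fin n) K :=
      ∑ g : G, (φ g).toLinearMap
    have hT : ∀ p, T p = ∑ g : G, φ g p := by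
      intro p
      simp [T]
    have hTinv : ∀ p (g : G), φ g (T p) = T p := by
      intro p g
      rw [hT, map_sum]
      refine Fintype.sum_equiv (Equiv.mulLeft g) _ _ ?_
      intro x
      simp
    have hThom : ∀ p e, p.IsHomogeneous e → (T p).IsHomogeneous e := by
      intro p e hp
      rw [hT]
      exact IsHomogeneous.sum _ _ _ (fun g _ => hdeg g e p hp)
    have hTmul : ∀ p, ∀ s ∈ S, T (p * s) = T p * s := by
      intro p s hs
      rw [hT, hT, Finset.sum_mul]
      refine Finset.sum_congr rfl (fun g _ => ?_)
      rw [map_mul, hSinv s hs g]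
    have key : ∀ p ∈ Ideal.span S, ∀ a,
        T (homogeneousComponent d (a * p)) ∈ Algebra.adjoin K S := by
      intro p hp
      induction hp using Submodule.span_induction with
      | mem s hs =>
        intro a
        obtain ⟨e, he, hse⟩ := hpos s hs
        rw [← sum_homogeneousComponent a, Finset.sum_mul, map_sum, map_sum]
        refine Subalgebra.sum_mem _ (fun i _ => ?_)
        have hi := homogeneousComponent_isHomogeneous i a
        rw [homogeneousComponent_of_mem ((mem_homogeneousSubmodule _ _).2 (hi.mul hse))]
        split_ifs with hdi
        · rw [hTmul _ s hs]
          exact Subalgebra.mul_mem _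
            (hlow i (by omega) _ (hThom _ _ hi) (hTinv _)) (Algebra.subset_adjoin hs)
        · rw [map_zero]
          exact Subalgebra.zero_mem _
      | zero => intro a; simp
      | add x y _ _ hx hy =>
        intro a
        rw [mul_add, map_add, map_add]
        exact Subalgebra.add_mem _ (hx a) (hy a)
      | smul r x _ hx =>
        intro a
        rw [smul_eq_mul, ← mul_assoc]
        exact hx (a * r)
    have h1 := key b h 1
    rw [one_mul, homogeneousComponent_eq_self hb, hT] at h1
    simp only [hbinv, Finset.sum_const, Finset.card_univ] at h1
    have hc : (Fintype.card G : K) ≠ 0 := fun h0 => hnm ((ringChar.spec K _).1 h0)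
    have h2 := Subalgebra.smul_mem _ h1 ((Fintype.card G : K)⁻¹)
    rwa [← Nat.cast_smul_eq_nsmul K, smul_smul, inv_mul_cancel₀ hc, one_smul] at h2
end

section
/- Fix a monomial order on R = K[x_1, …, x_n] over a field K, and let I ⊆ R be a homogeneous ideal. Then for every d ≥ 0, every homogeneous polynomial f ∈ R of degree d can be written as f = c + h, where h ∈ I is homogeneous of degree d and c is a K-linear combination of monomials of degree d that do not lie in lm(I) (the set of leading monomials of nonzero elements of I). -/
open MvPolynomial
open scoped MonomialOrder

/-- `u` is the leading monomial of `p` with respect to the monomial order `m`. -/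
def IsLM {n : ℕ} {K : Type*} [CommSemiring K] (m : MonomialOrder (Fin n))
    (p : MvPolynomial (Fin n) K) (u : Fin n →₀ ℕ) : Prop :=
  u ∈ p.support ∧ ∀ v ∈ p.support, v ≠ u → v ≺[m] u

/-- `lm(I)`: the set of monomials (exponent vectors) occurring as the leading monomial of
some nonzero element of the ideal `I`. -/
def lmSet {n : ℕ} {K : Type*} [Field K] (m : MonomialOrder (Fin n))
    (I : Ideal (MvPolynomial (Fin n) K)) : Set (Fin n →₀ ℕ) :=
  {u | ∃ p ∈ I, p ≠ 0 ∧ IsLM m p u}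

lemma homComp_mem {n : ℕ} {K : Type*} [Field K]
    (I : Ideal (MvPolynomial (Fin n) K))
    (hI : ∃ S : Set (MvPolynomial (Fin n) K),
      (∀ s ∈ S, ∃ e, MvPolynomial.IsHomogeneous s e) ∧ I = Ideal.span S)
    (d : ℕ) (p : MvPolynomial (Fin n) K) (hp : p ∈ I) : homogeneousComponent d p ∈ I := by
  obtain ⟨S, hS, rfl⟩ := hI
  letI : GradedRing (homogeneousSubmodule (Fin n) K) := MvPolynomial.gradedAlgebra
  have h := Ideal.homogeneous_span (homogeneousSubmodule (Fin n) K) S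
    (fun s hs => by
      obtain ⟨e, he⟩ := hS s hs
      exact ⟨e, he⟩)
  have := h d hp
  rw [← MvPolynomial.decomposition.decompose'_apply]
  exact this

/-- The polynomials of degree `d` which admit a decomposition. -/
noncomputable def goodSub {n : ℕ} {K : Type*} [Field K] (m : MonomialOrder (Fin n))
    (I : Ideal (MvPolynomial (Fin n) K)) (d : ℕ) : Submodule K (MvPolynomial (Fin n) K) :=
  restrictSupport K {u | u.degree = d ∧ u ∉ lmSet m I} ⊔
    (I.restrictScalars K ⊓ homogeneousSubmodule (Fin n) K d)

lemma mem_of_monomials {n : ℕ} {K : Type*} [Field K]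
    (D : Submodule K (MvPolynomial (Fin n) K)) (f : MvPolynomial (Fin n) K)
    (h : ∀ u ∈ f.support, monomial u (1 : K) ∈ D) : f ∈ D := by
  rw [f.as_sum]
  refine D.sum_mem fun u hu => ?_
  have := D.smul_mem (f.coeff u) (h u hu)
  rwa [smul_monomial, smul_eq_mul, mul_one] at this

lemma monomial_mem_good {n : ℕ} {K : Type*} [Field K] (m : MonomialOrder (Fin n))
    (I : Ideal (MvPolynomial (Fin n) K))
    (hI : ∃ S : Set (MvPolynomial (Fin n) K),
      (∀ s ∈ S, ∃ e, MvPolynomial.IsHomogeneous s e) ∧ I = Ideal.span S)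
    (d : ℕ) (b : m.syn) : ∀ u : Fin n →₀ ℕ, m.toSyn u = b → u.degree = d →
      monomial u (1 : K) ∈ goodSub m I d := by
  induction b using WellFoundedLT.induction with
  | ind b ih =>
  rintro u rfl hu
  by_cases hl : u ∈ lmSet m I
  · obtain ⟨p, hp, -, hup, hlt⟩ := hl
    set q := homogeneousComponent d p with hq
    have hqI : q ∈ I := homComp_mem I hI d p hp
    have hqh : q.IsHomogeneous d := homogeneousComponent_isHomogeneous d p
    have hc : ∀ v, v.degree = d → q.coeff v = p.coeff v := fun v hv => by
      rw [hq, coeff_homogeneousComponent, if_pos hv]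
    have ha : p.coeff u ≠ 0 := mem_support_iff.1 hup
    have h1 : (p.coeff u)⁻¹ • q ∈ goodSub m I d :=
      Submodule.smul_mem _ _ (Submodule.mem_sup_right ⟨hqI, hqh⟩)
    have h2 : monomial u (1 : K) - (p.coeff u)⁻¹ • q ∈ goodSub m I d := by
      refine mem_of_monomials _ _ fun v hv => ?_
      rw [mem_support_iff, coeff_sub, coeff_smul, coeff_monomial, smul_eq_mul] at hv
      by_cases huv : u = v
      · subst huv
        rw [hc u hu, if_pos rfl, inv_mul_cancel₀ ha, sub_self] at hv
        exact absurd rfl hv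
      · rw [if_neg huv, zero_sub, neg_ne_zero] at hv
        have hqv := right_ne_zero_of_mul hv
        have hvd : v.degree = d := by
          by_contra hne
          rw [hq, coeff_homogeneousComponent, if_neg hne] at hqv
          exact hqv rfl
        rw [hc v hvd] at hqv
        exact ih _ (hlt v (mem_support_iff.2 hqv) (Ne.symm huv)) v rfl hvd
    simpa using Submodule.add_mem _ h2 h1
  · refine Submodule.mem_sup_left ?_
    rw [mem_restrictSupport_iff]
    intro v hv
    have := support_monomial_subset hv
    rw [Finset.mem_singleton] at this
    subst this
    exact ⟨hu, hl⟩

/-- If `I` is a homogeneous ideal (i.e., generated by homogeneous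
polynomials), then every homogeneous polynomial `f` of degree `d` can be written as
`f = c + h`, where `h ∈ I` is homogeneous of degree `d` and `c` is a `K`-linear
combination of monomials of degree `d` not lying in `lm(I)`. -/
theorem homogeneous_decomposition_mod_ideal {n : ℕ} {K : Type*} [Field K]
    (m : MonomialOrder (Fin n))
    (I : Ideal (MvPolynomial (Fin n) K))
    (hI : ∃ S : Set (MvPolynomial (Fin n) K),
      (∀ s ∈ S, ∃ e, MvPolynomial.IsHomogeneous s e) ∧ I = Ideal.span S)
    (d : ℕ) (f : MvPolynomial (Fin n) K) (hf : f.IsHomogeneous d) :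
    ∃ c h : MvPolynomial (Fin n) K,
      h ∈ I ∧ h.IsHomogeneous d ∧
      (∀ u ∈ c.support, u.degree = d ∧ u ∉ lmSet m I) ∧
      f = c + h := by
  have hD : f ∈ goodSub m I d := mem_of_monomials _ _ fun u hu =>
    monomial_mem_good m I hI d _ u rfl (by
      have := hf (mem_support_iff.1 hu)
      rwa [Finsupp.degree_eq_weight_one])
  obtain ⟨c, hc, h, ⟨hhI, hhd⟩, e⟩ := Submodule.mem_sup.1 hD
  refine ⟨c, h, hhI, hhd, fun u hu => ?_, e.symm⟩
  rw [mem_restrictSupport_iff] at hc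
  exact hc hu
end

section
/- Let K be a field, R = K[x_1, …, x_n], and G a finite group acting on R by degree-preserving K-algebra automorphisms, with char K not dividing |G|. Fix a monomial order on R, let S ⊆ R^G be a set of homogeneous invariant polynomials, and set I = ⟨S⟩. Then for every d ≥ 0, every homogeneous invariant b ∈ R^G_d can be written as b = Σ c_m Rey(m) + h, where the sum runs over monomials m of degree d with m ∉ lm(I), c_m ∈ K, and h ∈ I ∩ R^G is a homogeneous invariant of degree d lying in I. In particular, R^G_d is spanned as a K-vector space by the Reynolds images of the degree-d monomials outside lm(I) together with (I ∩ R^G)_d. -/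
open MvPolynomial
open scoped MonomialOrder

/-- The Reynolds operator associated to an action of a finite group `G` on the
polynomial ring `K[x_1, …, x_n]` by `K`-algebra automorphisms. -/
noncomputable def Rey {n : ℕ} {K : Type*} [Field K] {G : Type*} [Group G] [Fintype G]
    (φ : G →* (MvPolynomial (Fin n) K ≃ₐ[K] MvPolynomial (Fin n) K))
    (r : MvPolynomial (Fin n) K) : MvPolynomial (Fin n) K :=
  (Fintype.card G : K)⁻¹ • ∑ g : G, φ g r

lemma span_homComp {n : ℕ} {K : Type*} [Field K] (S : Set (MvPolynomial (Fin n) K))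
    (hShom : ∀ s ∈ S, ∃ e, MvPolynomial.IsHomogeneous s e) (d : ℕ)
    (p : MvPolynomial (Fin n) K) (hp : p ∈ Ideal.span S) :
    homogeneousComponent d p ∈ Ideal.span S := by
  classical
  let _ := MvPolynomial.gradedAlgebra (σ := Fin n) (R := K)
  have hI : (Ideal.span S).IsHomogeneous (homogeneousSubmodule (Fin n) K) := by
    apply Ideal.homogeneous_span
    intro x hx
    obtain ⟨e, he⟩ := hShom x hx
    exact ⟨e, he⟩
  exact homogeneousComponent_mem_of_mem hI hp d

/-- Standard and ideal part in degree `d`. -/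
noncomputable def stdPlus {n : ℕ} {K : Type*} [Field K] (m : MonomialOrder (Fin n))
    (I : Ideal (MvPolynomial (Fin n) K)) (d : ℕ) : Submodule K (MvPolynomial (Fin n) K) :=
  restrictSupport K {u | u.degree = d ∧ u ∉ lmSet m I} ⊔
    (I.restrictScalars K ⊓ homogeneousSubmodule (Fin n) K d)

lemma monomial_mem_stdPlus {n : ℕ} {K : Type*} [Field K] (m : MonomialOrder (Fin n))
    (S : Set (MvPolynomial (Fin n) K))
    (hShom : ∀ s ∈ S, ∃ e, MvPolynomial.IsHomogeneous s e) (d : ℕ) :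
    ∀ (y : m.syn) (u : Fin n →₀ ℕ), m.toSyn u = y → u.degree = d →
      monomial u (1 : K) ∈ stdPlus m (Ideal.span S) d := by
  classical
  intro y
  induction y using WellFoundedLT.induction with
  | ind y ih =>
  intro u hu hd
  by_cases hlm : u ∈ lmSet m (Ideal.span S)
  · obtain ⟨p, hpI, -, hup, hlt⟩ := hlm
    set q := homogeneousComponent d p with hq
    have hqI : q ∈ Ideal.span S := span_homComp S hShom d p hpI
    have hqh : q.IsHomogeneous d := homogeneousComponent_isHomogeneous d p
    have hcu : q.coeff u = p.coeff u := by rw [hq, coeff_homogeneousComponent, if_pos hd]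
    have hc : q.coeff u ≠ 0 := by rw [hcu]; exact mem_support_iff.mp hup
    have huq : u ∈ q.support := mem_support_iff.mpr hc
    have hsum : q = monomial u (q.coeff u) +
        ∑ v ∈ q.support.erase u, monomial v (q.coeff v) := by
      rw [Finset.add_sum_erase _ (fun v => monomial v (q.coeff v)) huq]
      exact q.as_sum
    have hrest : ∑ v ∈ q.support.erase u, monomial v (q.coeff v) ∈
        stdPlus m (Ideal.span S) d := by
      refine Submodule.sum_mem _ fun v hv => ?_
      obtain ⟨hne, hvq⟩ := Finset.mem_erase.mp hv
      have hvd : v.degree = d := by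
        by_contra hcon
        exact mem_support_iff.mp hvq (hqh.coeff_eq_zero hcon)
      have hvp : v ∈ p.support := by
        have h1 := mem_support_iff.mp hvq
        rw [hq, coeff_homogeneousComponent, if_pos hvd] at h1
        exact mem_support_iff.mpr h1
      have := ih (m.toSyn v) (hu ▸ hlt v hvp hne) v rfl hvd
      have h2 := Submodule.smul_mem _ (q.coeff v) this
      rwa [smul_monomial, smul_eq_mul, mul_one] at h2
    have hqW : q ∈ stdPlus m (Ideal.span S) d :=
      Submodule.mem_sup_right ⟨hqI, hqh⟩
    have h3 : monomial u (q.coeff u) ∈ stdPlus m (Ideal.span S) d := by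
      have := Submodule.sub_mem _ hqW hrest
      rwa [sub_eq_of_eq_add hsum] at this
    have h4 := Submodule.smul_mem _ (q.coeff u)⁻¹ h3
    rwa [smul_monomial, smul_eq_mul, inv_mul_cancel₀ hc] at h4
  · apply Submodule.mem_sup_left
    rw [mem_restrictSupport_iff]
    intro v hv
    have : v = u := by
      have := support_monomial_subset hv
      simpa using this
    subst this
    exact ⟨hd, hlm⟩

/-- Non-modular case, degree-preserving action, `S ⊆ R^G` a set of
homogeneous invariants, `I = ⟨S⟩`. Every homogeneous invariant `b` of degree `d` can be
written as `b = ∑ c_u • Rey(x^u) + h`, the sum running over monomials `u` of degree `d`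
with `u ∉ lm(I)`, where `h ∈ I` is a homogeneous invariant of degree `d`. -/
theorem invariant_decomposition_reynolds {n : ℕ} {K : Type*} [Field K]
    {G : Type*} [Group G] [Fintype G]
    (φ : G →* (MvPolynomial (Fin n) K ≃ₐ[K] MvPolynomial (Fin n) K))
    (hdeg : ∀ (g : G) (e : ℕ) (p : MvPolynomial (Fin n) K),
      p.IsHomogeneous e → (φ g p).IsHomogeneous e)
    (hnm : ¬ (ringChar K ∣ Fintype.card G))
    (m : MonomialOrder (Fin n))
    (S : Set (MvPolynomial (Fin n) K))
    (hSinv : ∀ s ∈ S, ∀ g : G, φ g s = s)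
    (hShom : ∀ s ∈ S, ∃ e, MvPolynomial.IsHomogeneous s e)
    (d : ℕ) (b : MvPolynomial (Fin n) K)
    (hb : b.IsHomogeneous d) (hbinv : ∀ g : G, φ g b = b) :
    ∃ (T : Finset (Fin n →₀ ℕ)) (c : (Fin n →₀ ℕ) → K) (h : MvPolynomial (Fin n) K),
      (∀ u ∈ T, u.degree = d ∧ u ∉ lmSet m (Ideal.span S)) ∧
      h ∈ Ideal.span S ∧ (∀ g : G, φ g h = h) ∧ h.IsHomogeneous d ∧
      b = (∑ u ∈ T, c u • Rey φ (monomial u (1 : K))) + h := by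
  classical
  have hcard : (Fintype.card G : K) ≠ 0 := fun h => hnm ((ringChar.spec K _).mp h)
  have hbW : b ∈ stdPlus m (Ideal.span S) d := by
    rw [b.as_sum]
    refine Submodule.sum_mem _ fun v hv => ?_
    have hvd : v.degree = d := by
      by_contra hcon
      exact mem_support_iff.mp hv (hb.coeff_eq_zero hcon)
    have h2 := Submodule.smul_mem _ (b.coeff v)
      (monomial_mem_stdPlus m S hShom d _ v rfl hvd)
    rwa [smul_monomial, smul_eq_mul, mul_one] at h2
  obtain ⟨r, hr, h, ⟨hhI, hhd⟩, hrh⟩ := Submodule.mem_sup.mp hbW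
  rw [mem_restrictSupport_iff] at hr
  have hgI : ∀ g : G, ∀ x ∈ Ideal.span S, φ g x ∈ Ideal.span S := by
    intro g x hx
    have h1 : Ideal.span S ≤ (Ideal.span S).comap (φ g : _ →+* MvPolynomial (Fin n) K) := by
      rw [Ideal.span_le]
      intro s hs
      change φ g s ∈ Ideal.span S
      rw [hSinv s hs g]
      exact Ideal.subset_span hs
    exact h1 hx
  have hRb : Rey φ b = b := by
    simp only [Rey, hbinv, Finset.sum_const, Finset.card_univ]
    rw [← Nat.cast_smul_eq_nsmul K, smul_smul, inv_mul_cancel₀ hcard, one_smul]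
  refine ⟨r.support, fun u => r.coeff u, Rey φ h, fun u hu => hr hu, ?_, ?_, ?_, ?_⟩
  · exact ((Ideal.span S).restrictScalars K).smul_mem _
      (Submodule.sum_mem _ fun g _ => hgI g h hhI)
  · intro g
    simp only [Rey, map_smul, map_sum]
    congr 1
    rw [← Equiv.sum_comp (Equiv.mulLeft g) (fun k : G => φ k h)]
    simp
  · exact (homogeneousSubmodule (Fin n) K d).smul_mem _
      (Submodule.sum_mem _ fun g _ => hdeg g d h hhd)
  · have hadd : Rey φ b = Rey φ r + Rey φ h := by
      rw [← hrh]
      simp only [Rey, map_add, Finset.sum_add_distrib, smul_add]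
    have hRr : Rey φ r = ∑ u ∈ r.support, r.coeff u • Rey φ (monomial u (1 : K)) := by
      conv_lhs => rw [r.as_sum]
      simp only [Rey, map_sum]
      rw [Finset.sum_comm, Finset.smul_sum]
      refine Finset.sum_congr rfl fun u _ => ?_
      have key : ∑ g : G, φ g (monomial u (r.coeff u)) =
          r.coeff u • ∑ g : G, φ g (monomial u (1 : K)) := by
        rw [Finset.smul_sum]
        refine Finset.sum_congr rfl fun g _ => ?_
        rw [← map_smul, smul_monomial, smul_eq_mul, mul_one]
      rw [key, smul_comm]
    rw [← hRr, ← hadd, hRb]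
end

section
/- Let K be a field, R = K[x_1, …, x_n], and G a finite group acting on R by degree-preserving K-algebra automorphisms, with char K not dividing |G|. Let S ⊆ R^G be a set of homogeneous invariant polynomials of positive degree that generates R^G as a K-algebra. Then the ideal ⟨S⟩ of R generated by S is zero-dimensional; equivalently, the quotient ring R/⟨S⟩ is a finite-dimensional K-vector space. -/
open MvPolynomial

/-- Non-modular case, degree-preserving action. If `S ⊆ R^G` is a set
of homogeneous invariants of positive degree generating `R^G` as a `K`-algebra, then the
ideal `⟨S⟩` of `R` generated by `S` is zero-dimensional; equivalently, `R/⟨S⟩` is a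
finite-dimensional `K`-vector space. -/
theorem quotient_by_generators_finiteDimensional {n : ℕ} {K : Type*} [Field K]
    {G : Type*} [Group G] [Fintype G]
    (φ : G →* (MvPolynomial (Fin n) K ≃ₐ[K] MvPolynomial (Fin n) K))
    (hdeg : ∀ (g : G) (e : ℕ) (p : MvPolynomial (Fin n) K),
      p.IsHomogeneous e → (φ g p).IsHomogeneous e)
    (hnm : ¬ (ringChar K ∣ Fintype.card G))
    (S : Set (MvPolynomial (Fin n) K))
    (hSinv : ∀ s ∈ S, ∀ g : G, φ g s = s)
    (hShom : ∀ s ∈ S, ∃ e, 0 < e ∧ MvPolynomial.IsHomogeneous s e)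
    (hgen : Algebra.adjoin K S = invariants φ) :
    FiniteDimensional K (MvPolynomial (Fin n) K ⧸ Ideal.span S) := by
  classical
  -- Every invariant becomes a scalar modulo `⟨S⟩`.
  have hscal : ∀ r : MvPolynomial (Fin n) K, (∀ g : G, φ g r = r) →
      ∃ c : K, algebraMap K (MvPolynomial (Fin n) K ⧸ Ideal.span S) c
        = Ideal.Quotient.mk (Ideal.span S) r := by
    intro r hr
    have hmem : r ∈ Algebra.adjoin K S := by
      rw [hgen]
      exact hr
    induction hmem using Algebra.adjoin_induction with
    | mem s hs =>
      exact ⟨0, by rw [map_zero, Ideal.Quotient.eq_zero_iff_mem.mpr (Ideal.subset_span hs)]⟩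
    | algebraMap c => exact ⟨c, rfl⟩
    | add a b ha hb iha ihb =>
      rw [hgen] at ha hb
      obtain ⟨c, hc⟩ := iha ha
      obtain ⟨d, hd⟩ := ihb hb
      exact ⟨c + d, by rw [map_add, map_add, hc, hd]⟩
    | mul a b ha hb iha ihb =>
      rw [hgen] at ha hb
      obtain ⟨c, hc⟩ := iha ha
      obtain ⟨d, hd⟩ := ihb hb
      exact ⟨c * d, by rw [map_mul, map_mul, hc, hd]⟩
  -- The quotient is integral over `K`: use the orbit polynomial.
  have hint : Algebra.IsIntegral K (MvPolynomial (Fin n) K ⧸ Ideal.span S) := by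
    refine ⟨fun q => ?_⟩
    obtain ⟨x, rfl⟩ := Ideal.Quotient.mk_surjective q
    let P : Polynomial (MvPolynomial (Fin n) K) :=
      ∏ g : G, (Polynomial.X - Polynomial.C (φ g x))
    have hPmonic : P.Monic := Polynomial.monic_prod_of_monic _ _
      fun g _ => Polynomial.monic_X_sub_C _
    have hPinv : ∀ h : G, P.map (φ h : MvPolynomial (Fin n) K →+* MvPolynomial (Fin n) K) = P := by
      intro h
      simp only [P, Polynomial.map_prod, Polynomial.map_sub, Polynomial.map_X, Polynomial.map_C]
      refine Fintype.prod_equiv (Equiv.mulLeft h) _ _ fun g => ?_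
      simp [map_mul]
    have hProot : P.eval x = 0 := by
      simp only [P, Polynomial.eval_prod]
      exact Finset.prod_eq_zero (Finset.mem_univ 1) (by simp)
    have hlift : P.map (Ideal.Quotient.mk (Ideal.span S)) ∈
        Polynomial.lifts (algebraMap K (MvPolynomial (Fin n) K ⧸ Ideal.span S)) := by
      rw [Polynomial.lifts_iff_coeff_lifts]
      intro k
      rw [Polynomial.coeff_map]
      refine hscal _ fun g => ?_
      have := congrArg (fun p => Polynomial.coeff p k) (hPinv g)
      simpa [Polynomial.coeff_map] using this
    obtain ⟨p, hp, -, hpm⟩ :=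
      Polynomial.lifts_and_natDegree_eq_and_monic hlift (hPmonic.map _)
    refine ⟨p, hpm, ?_⟩
    rw [Polynomial.eval₂_eq_eval_map, hp, Polynomial.eval_map, Polynomial.eval₂_hom, hProot,
      map_zero]
  exact Algebra.IsIntegral.finite
end

section
/- Let K be a field, R = K[x_1, …, x_n], and G a finite group acting on R by degree-preserving K-algebra automorphisms, with char K not dividing |G|. Let S ⊆ R^G be a finite set of homogeneous invariant polynomials of positive degree that generates R^G as a K-algebra, and suppose that for every b ∈ S, b does not lie in the K-subalgebra ⟨⟨S ∖ {b}⟩⟩ generated by the remaining elements. Then S is a minimal generating set: every set T of homogeneous invariant polynomials of positive degree generating R^G as a K-algebra satisfies |T| ≥ |S|. -/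
open MvPolynomial

lemma hc_mul_mem {σ K : Type*} [Field K] (V : Submodule K (MvPolynomial σ K)) (d : ℕ)
    (p q : MvPolynomial σ K)
    (h : ∀ i j, i + j = d → homogeneousComponent i p * homogeneousComponent j q ∈ V) :
    homogeneousComponent d (p * q) ∈ V := by
  have e : p * q = ∑ i ∈ Finset.range (p.totalDegree + 1),
      ∑ j ∈ Finset.range (q.totalDegree + 1),
        homogeneousComponent i p * homogeneousComponent j q := by
    rw [← Finset.sum_mul_sum, sum_homogeneousComponent, sum_homogeneousComponent]
  rw [e, map_sum]
  refine Submodule.sum_mem _ fun i _ => ?_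
  rw [map_sum]
  refine Submodule.sum_mem _ fun j _ => ?_
  have hm : homogeneousComponent i p * homogeneousComponent j q ∈
      homogeneousSubmodule σ K (i + j) :=
    (homogeneousComponent_isHomogeneous i p).mul (homogeneousComponent_isHomogeneous j q)
  rw [homogeneousComponent_of_mem hm]
  split_ifs with hd
  · exact h i j hd.symm
  · exact V.zero_mem

lemma hc_adjoin_mem {σ K : Type*} [Field K] (S : Set (MvPolynomial σ K))
    (hS : ∀ s ∈ S, s.IsHomogeneous s.totalDegree) (a : MvPolynomial σ K)
    (ha : a ∈ Algebra.adjoin K S) : ∀ d,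
    homogeneousComponent d a ∈ Algebra.adjoin K {s ∈ S | s.totalDegree ≤ d} := by
  induction ha using Algebra.adjoin_induction with
  | mem s hs =>
    intro d
    rw [homogeneousComponent_of_mem (hS s hs)]
    split_ifs with hd
    · exact Algebra.subset_adjoin ⟨hs, hd.ge⟩
    · exact zero_mem _
  | algebraMap r =>
    intro d
    have hm : (algebraMap K (MvPolynomial σ K) r) ∈ homogeneousSubmodule σ K 0 :=
      isHomogeneous_C σ r
    rw [homogeneousComponent_of_mem hm]
    split_ifs with hd
    · exact Subalgebra.algebraMap_mem _ r
    · exact zero_mem _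
  | add x y _ _ hx hy =>
    intro d
    rw [map_add]
    exact add_mem (hx d) (hy d)
  | mul x y _ _ hx hy =>
    intro d
    refine hc_mul_mem (Subalgebra.toSubmodule (Algebra.adjoin K {s ∈ S | s.totalDegree ≤ d})) d
      x y fun i j hij => ?_
    refine Subalgebra.mul_mem _ ?_ ?_
    · refine Algebra.adjoin_mono ?_ (hx i)
      exact fun s hs => ⟨hs.1, hs.2.trans (by omega)⟩
    · refine Algebra.adjoin_mono ?_ (hy j)
      exact fun s hs => ⟨hs.1, hs.2.trans (by omega)⟩

/-- The augmentation ideal of a subalgebra, as a `K`-subspace. -/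
noncomputable def augSub {σ K : Type*} [Field K] (A : Subalgebra K (MvPolynomial σ K)) :
    Submodule K (MvPolynomial σ K) :=
  Subalgebra.toSubmodule A ⊓ LinearMap.ker (homogeneousComponent (R := K) (σ := σ) 0)

lemma hc_sq_mem {σ K : Type*} [Field K] (S : Set (MvPolynomial σ K))
    (hS : ∀ s ∈ S, s.IsHomogeneous s.totalDegree) (d : ℕ) (a : MvPolynomial σ K)
    (ha : a ∈ augSub (Algebra.adjoin K S) * augSub (Algebra.adjoin K S)) :
    homogeneousComponent d a ∈ Algebra.adjoin K {s ∈ S | s.totalDegree < d} := by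
  induction ha using Submodule.mul_induction_on' with
  | mem_mul_mem p hp q hq =>
    refine hc_mul_mem (Subalgebra.toSubmodule (Algebra.adjoin K {s ∈ S | s.totalDegree < d})) d
      p q fun i j hij => ?_
    rcases Nat.eq_zero_or_pos i with rfl | hi
    · rw [LinearMap.mem_ker.1 hp.2, zero_mul]; exact zero_mem _
    rcases Nat.eq_zero_or_pos j with rfl | hj
    · rw [LinearMap.mem_ker.1 hq.2, mul_zero]; exact zero_mem _
    refine Subalgebra.mul_mem _ ?_ ?_
    · refine Algebra.adjoin_mono ?_ (hc_adjoin_mem S hS p hp.1 i)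
      exact fun s hs => ⟨hs.1, hs.2.trans_lt (by omega)⟩
    · refine Algebra.adjoin_mono ?_ (hc_adjoin_mem S hS q hq.1 j)
      exact fun s hs => ⟨hs.1, hs.2.trans_lt (by omega)⟩
  | add x _ y _ hx hy =>
    rw [map_add]
    exact add_mem hx hy

lemma sub_const_mem {σ K : Type*} [Field K] (T : Set (MvPolynomial σ K))
    (hT : ∀ t ∈ T, constantCoeff t = 0) (a : MvPolynomial σ K)
    (ha : a ∈ Algebra.adjoin K T) :
    a - C (constantCoeff a) ∈ Submodule.span K T ⊔
      augSub (Algebra.adjoin K T) * augSub (Algebra.adjoin K T) := by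
  have key : ∀ x ∈ Algebra.adjoin K T,
      x - C (constantCoeff x) ∈ augSub (Algebra.adjoin K T) := by
    intro x hx
    refine ⟨sub_mem hx (Subalgebra.algebraMap_mem _ _), ?_⟩
    change _ ∈ LinearMap.ker _
    rw [LinearMap.mem_ker, homogeneousComponent_zero]
    simp [constantCoeff_eq]
  induction ha using Algebra.adjoin_induction with
  | mem s hs =>
    rw [hT s hs, map_zero, sub_zero]
    exact Submodule.mem_sup_left (Submodule.subset_span hs)
  | algebraMap r =>
    simp [MvPolynomial.algebraMap_eq]
  | add x y _ _ hx hy =>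
    have : x + y - C (constantCoeff (x + y)) =
      (x - C (constantCoeff x)) + (y - C (constantCoeff y)) := by simp; ring
    rw [this]
    exact add_mem hx hy
  | mul x y hx' hy' hx hy =>
    have : x * y - C (constantCoeff (x * y)) =
      (x - C (constantCoeff x)) * (y - C (constantCoeff y))
      + (constantCoeff x • (y - C (constantCoeff y))
        + constantCoeff y • (x - C (constantCoeff x))) := by
      simp only [map_mul, MvPolynomial.smul_eq_C_mul]; ring
    rw [this]
    exact add_mem (Submodule.mem_sup_right (Submodule.mul_mem_mul (key x hx') (key y hy')))
      (add_mem (Submodule.smul_mem _ _ hy) (Submodule.smul_mem _ _ hx))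

lemma card_le_aux {σ K : Type*} [Field K] (S T : Finset (MvPolynomial σ K))
    (hS : ∀ s ∈ S, s.IsHomogeneous s.totalDegree)
    (hS0 : ∀ s ∈ S, constantCoeff s = 0)
    (hT0 : ∀ t ∈ T, constantCoeff t = 0)
    (hST : Algebra.adjoin K (S : Set (MvPolynomial σ K)) = Algebra.adjoin K T)
    (hSmin : ∀ b ∈ S, b ∉ Algebra.adjoin K ((S : Set (MvPolynomial σ K)) \ {b})) :
    S.card ≤ T.card := by
  classical
  set Q := augSub (Algebra.adjoin K (S : Set (MvPolynomial σ K))) *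
    augSub (Algebra.adjoin K (S : Set (MvPolynomial σ K))) with hQ
  have li : LinearIndependent K (fun s : S => Q.mkQ (s : MvPolynomial σ K)) := by
    rw [Fintype.linearIndependent_iff]
    intro g hg b
    by_contra hb
    have hmem : ∑ i : S, g i • (i : MvPolynomial σ K) ∈ Q := by
      rw [← Submodule.Quotient.mk_eq_zero, ← Submodule.mkQ_apply, map_sum]
      simpa only [map_smul] using hg
    have h1 := hc_sq_mem (S : Set (MvPolynomial σ K)) hS
      (b : MvPolynomial σ K).totalDegree _ hmem
    have h2 : homogeneousComponent (b : MvPolynomial σ K).totalDegree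
        (∑ i : S, g i • (i : MvPolynomial σ K)) ∈
        Algebra.adjoin K ((S : Set (MvPolynomial σ K)) \ {(b : MvPolynomial σ K)}) := by
      refine Algebra.adjoin_mono ?_ h1
      refine fun s hs => ⟨hs.1, ?_⟩
      rintro rfl
      exact lt_irrefl _ hs.2
    rw [map_sum, ← Finset.add_sum_erase _ _ (Finset.mem_univ b)] at h2
    have h3 : ∑ i ∈ Finset.univ.erase b, homogeneousComponent (b : MvPolynomial σ K).totalDegree
        (g i • (i : MvPolynomial σ K)) ∈
        Algebra.adjoin K ((S : Set (MvPolynomial σ K)) \ {(b : MvPolynomial σ K)}) := by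
      refine sum_mem fun i hi => ?_
      rw [map_smul, homogeneousComponent_of_mem (hS i i.2)]
      refine Subalgebra.smul_mem _ ?_ _
      split_ifs
      · exact Algebra.subset_adjoin ⟨i.2, fun h => (Finset.mem_erase.1 hi).1 (Subtype.ext h)⟩
      · exact zero_mem _
    have h4 := sub_mem h2 h3
    rw [add_sub_cancel_right, map_smul, homogeneousComponent_eq_self (hS b b.2)] at h4
    have h5 := Subalgebra.smul_mem _ h4 (g b)⁻¹
    rw [smul_smul, inv_mul_cancel₀ hb, one_smul] at h5
    exact hSmin b b.2 h5
  have hle : Set.range (fun s : S => Q.mkQ (s : MvPolynomial σ K)) ≤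
      Submodule.span K ((T.image Q.mkQ : Finset _) : Set (MvPolynomial σ K ⧸ Q)) := by
    rintro _ ⟨s, rfl⟩
    have hs : (s : MvPolynomial σ K) ∈ Algebra.adjoin K (T : Set (MvPolynomial σ K)) := by
      rw [← hST]; exact Algebra.subset_adjoin s.2
    have h := sub_const_mem (T : Set (MvPolynomial σ K)) hT0 _ hs
    rw [hS0 s s.2, map_zero, sub_zero, ← hST, ← hQ] at h
    have h' := Submodule.mem_map_of_mem (f := Q.mkQ) h
    rw [Submodule.map_sup, Submodule.mkQ_map_self, sup_bot_eq, Submodule.map_span] at h'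
    simpa using h'
  have := linearIndependent_le_span_aux' _ li _ hle
  simp only [Fintype.card_coe, Finset.coe_sort_coe] at this
  exact this.trans Finset.card_image_le

lemma hom_pos_facts {σ K : Type*} [Field K] (s : MvPolynomial σ K)
    (h : ∃ e, 0 < e ∧ s.IsHomogeneous e) :
    s.IsHomogeneous s.totalDegree ∧ constantCoeff s = 0 := by
  obtain ⟨e, he, hs⟩ := h
  constructor
  · by_cases h0 : s = 0
    · subst h0; exact isHomogeneous_zero _ _ _
    · rwa [hs.totalDegree h0]
  · rw [constantCoeff_eq]
    exact hs.coeff_eq_zero (by simpa using he.ne)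

/-- Non-modular case, degree-preserving action. If `S` is a finite set
of homogeneous invariants of positive degree which generates `R^G` as a `K`-algebra and
no element of `S` lies in the subalgebra generated by the remaining elements, then `S` is
a minimal generating set: every finite set `T` of homogeneous invariants of positive
degree generating `R^G` as a `K`-algebra satisfies `|T| ≥ |S|`. -/
theorem minimal_generating_set_card_le {n : ℕ} {K : Type*} [Field K]
    {G : Type*} [Group G] [Fintype G]
    (φ : G →* (MvPolynomial (Fin n) K ≃ₐ[K] MvPolynomial (Fin n) K))
    (hdeg : ∀ (g : G) (e : ℕ) (p : MvPolynomial (Fin n) K),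
      p.IsHomogeneous e → (φ g p).IsHomogeneous e)
    (hnm : ¬ (ringChar K ∣ Fintype.card G))
    (S : Finset (MvPolynomial (Fin n) K))
    (hSinv : ∀ s ∈ S, ∀ g : G, φ g s = s)
    (hShom : ∀ s ∈ S, ∃ e, 0 < e ∧ MvPolynomial.IsHomogeneous s e)
    (hSgen : Algebra.adjoin K (S : Set (MvPolynomial (Fin n) K)) = invariants φ)
    (hSmin : ∀ b ∈ S,
      b ∉ Algebra.adjoin K ((S : Set (MvPolynomial (Fin n) K)) \ {b})) :
    ∀ T : Finset (MvPolynomial (Fin n) K),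
      (∀ t ∈ T, ∀ g : G, φ g t = t) →
      (∀ t ∈ T, ∃ e, 0 < e ∧ MvPolynomial.IsHomogeneous t e) →
      Algebra.adjoin K (T : Set (MvPolynomial (Fin n) K)) = invariants φ →
      S.card ≤ T.card := by
  intro T _ hThom hTgen
  exact card_le_aux S T (fun s hs => (hom_pos_facts s (hShom s hs)).1)
    (fun s hs => (hom_pos_facts s (hShom s hs)).2)
    (fun t ht => (hom_pos_facts t (hThom t ht)).2) (hSgen.trans hTgen.symm) hSmin
end
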